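/- Let n, k, m be positive integers with k ≥ n+1, and let 1 ≤ l ≤ r ≤ n. Then Σ_{J⊆{1,…,n}, |J|=l, max J=r} S(k, m, J) = A_l · Σ_{𝐩=(p_l,…,p_{n−1})∈ℕ≥1^{n−l}} B_{l,r}(𝐩) Σ_{𝐤∈I(k,r)} C_{l,r}(𝐩,𝐤). -/

import Mathlib

open Finset

/-- `PS p j` is the partial sum `p₁ + ⋯ + p_j` of the positive integers
`pᵢ = p (i-1) + 1` encoded by `p : Fin N → ℕ`. -/
def PS {N : ℕ} (p : Fin N → ℕ) (j : ℕ) : ℕ :=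
  ∑ i ∈ Finset.univ.filter (fun i : Fin N => (i : ℕ) < j), (p i + 1)

/-- `Ikr n k r` is the set `I(k,r)` of tuples `(k₁,…,kₙ)` of positive integers with
`kₙ ≥ 2`, `k₁ + ⋯ + kₙ = k` and `k₁ = ⋯ = k_{r-1} = 1`; the tuple is encoded as
`kv : Fin n → ℕ` with `k_j = kv (j-1)`. -/
def Ikr (n k r : ℕ) : Finset (Fin n → ℕ) :=
  (Fintype.piFinset fun _ : Fin n => Finset.range (k + 1)).filter fun kv =>
    (∀ i, 1 ≤ kv i) ∧ (∀ i : Fin n, (i : ℕ) = n - 1 → 2 ≤ kv i) ∧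
      (∑ i, kv i) = k ∧ ∀ i : Fin n, (i : ℕ) + 2 ≤ r → kv i = 1

/-- `S n k m J` is the quantity `S(k,m,J)`: the sum over `𝐤 ∈ I(k, max J)` and over
tuples `𝐦` of positive integers with `∑_{j∈J} m_j = m` of
`1/(m₁^{k₁}(m₁+m₂)^{k₂}⋯(m₁+⋯+mₙ)^{kₙ})`. -/
noncomputable def S (n k m : ℕ) (J : Finset (Fin n)) : ℝ :=
  ∑ kv ∈ Ikr n k (J.sup fun j => (j : ℕ) + 1),
    ∑' mv : {mv : Fin n → ℕ // (∑ j ∈ J, (mv j + 1)) = m},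
      (∏ i : Fin n, ((PS mv.val ((i : ℕ) + 1) : ℕ) : ℝ) ^ kv i)⁻¹

/-- `kval n kv j` is `k_j`, the `j`-th (1-indexed) component of the tuple encoded by
`kv : Fin n → ℕ`. -/
def kval (n : ℕ) (kv : Fin n → ℕ) (j : ℕ) : ℕ :=
  if h : j - 1 < n then kv ⟨j - 1, h⟩ else 0

/-- `Bf n l r p = B_{l,r}(𝐩) = 1/(p_l(p_l+p_{l+1})⋯(p_l+⋯+p_{r-1}))`, where
`p : Fin (n-l) → ℕ` encodes the positive integers `(p_l,…,p_{n-1})` via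
`p_{l+i} = p i + 1`, so that `p_l + ⋯ + p_{l+j-1} = PS p j`. -/
noncomputable def Bf (n l r : ℕ) (p : Fin (n - l) → ℕ) : ℝ :=
  ∏ j ∈ Finset.Icc 1 (r - l), ((PS p j : ℕ) : ℝ)⁻¹

/-- `Cf n m l r p kv = C_{l,r}(𝐩,𝐤) = 1/((m+p_l+⋯+p_{r-1})^{k_r}⋯(m+p_l+⋯+p_{n-1})^{k_n})`. -/
noncomputable def Cf (n m l r : ℕ) (p : Fin (n - l) → ℕ) (kv : Fin n → ℕ) : ℝ :=
  ∏ j ∈ Finset.Icc r n, (((m + PS p (j - l) : ℕ) : ℝ) ^ kval n kv j)⁻¹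

/-- `Af m l = A_l = ∑_{(p₁,…,p_{l-1}), p₁+⋯+p_{l-1}<m} 1/(p₁(p₁+p₂)⋯(p₁+⋯+p_{l-1}))`. -/
noncomputable def Af (m l : ℕ) : ℝ :=
  ∑ q ∈ (Fintype.piFinset fun _ : Fin (l - 1) => Finset.range m).filter
      (fun q => (∑ i, (q i + 1)) < m),
    ∏ j ∈ Finset.Icc 1 (l - 1), ((PS q j : ℕ) : ℝ)⁻¹


theorem PS_pos {N : ℕ} (p : Fin N → ℕ) (j : ℕ) (hj : 0 < j) (hN : j ≤ N) : 0 < PS p j := by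
  unfold PS
  refine Finset.sum_pos (fun _ _ => by omega) ⟨⟨0, by omega⟩, by simpa using hj⟩

theorem PS_zero {N : ℕ} (p : Fin N → ℕ) : PS p 0 = 0 := by simp [PS]

theorem PS_mono {N : ℕ} (p : Fin N → ℕ) {i j : ℕ} (h : i ≤ j) : PS p i ≤ PS p j := by
  unfold PS
  apply Finset.sum_le_sum_of_subset
  intro x; simp; omega

theorem le_PS {N : ℕ} (p : Fin N → ℕ) (i : Fin N) : p i + 1 ≤ PS p (i + 1) := by
  unfold PS
  exact Finset.single_le_sum (f := fun i => p i + 1) (fun _ _ => by omega) (by simp)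

theorem PS_full {N : ℕ} (p : Fin N → ℕ) (j : ℕ) (h : N ≤ j) : PS p j = ∑ i, (p i + 1) := by
  unfold PS
  congr 1
  ext x; simp; omega

/-- lattice path form of the shuffle identity -/
theorem shuffle (Q P : ℕ → ℝ) (hQ0 : Q 0 = 0) (hP0 : P 0 = 0) (N : ℕ) : ∀ s t : ℕ, s + t = N →
    (∀ a, 0 < a → a ≤ s → 0 < Q a) → (∀ a, 0 < a → a ≤ t → 0 < P a) →
    ∑ J ∈ Finset.powersetCard s (Finset.range N),
      ∏ j ∈ Finset.range N, (Q ((J.filter (· < j + 1)).card) +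
        P (j + 1 - (J.filter (· < j + 1)).card))⁻¹
    = (∏ a ∈ Finset.Icc 1 s, (Q a)⁻¹) * ∏ b ∈ Finset.Icc 1 t, (P b)⁻¹ := by
  induction N with
  | zero =>
    intro s t h _ _
    obtain ⟨rfl, rfl⟩ : s = 0 ∧ t = 0 := by omega
    simp
  | succ N ih =>
    intro s t h hQ hP
    have key1 : ∀ J ∈ Finset.powersetCard s (Finset.range N),
        ∏ j ∈ Finset.range (N+1), (Q ((J.filter (· < j + 1)).card) +
          P (j + 1 - (J.filter (· < j + 1)).card))⁻¹ =
        (∏ j ∈ Finset.range N, (Q ((J.filter (· < j + 1)).card) +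
          P (j + 1 - (J.filter (· < j + 1)).card))⁻¹) * (Q s + P t)⁻¹ := by
      intro J hJ
      rw [Finset.mem_powersetCard] at hJ
      rw [Finset.prod_range_succ]
      have : J.filter (· < N + 1) = J := by
        apply Finset.filter_true_of_mem
        intro x hx; have := hJ.1 hx; simp at this; omega
      rw [this, hJ.2]
      congr 5; omega
    have key2 : ∀ s', s = s' + 1 → ∀ J ∈ Finset.powersetCard s' (Finset.range N),
        ∏ j ∈ Finset.range (N+1), (Q (((insert N J).filter (· < j + 1)).card) +
          P (j + 1 - ((insert N J).filter (· < j + 1)).card))⁻¹ =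
        (∏ j ∈ Finset.range N, (Q ((J.filter (· < j + 1)).card) +
          P (j + 1 - (J.filter (· < j + 1)).card))⁻¹) * (Q s + P t)⁻¹ := by
      intro s' hs J hJ
      rw [Finset.mem_powersetCard] at hJ
      have hN : N ∉ J := fun hx => by have := hJ.1 hx; simp at this
      rw [Finset.prod_range_succ]
      have : (insert N J).filter (· < N + 1) = insert N J := by
        apply Finset.filter_true_of_mem
        intro x hx
        rcases Finset.mem_insert.1 hx with rfl | hx
        · omega
        · have := hJ.1 hx; simp at this; omega
      rw [this, Finset.card_insert_of_notMem hN, hJ.2]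
      congr 1
      · apply Finset.prod_congr rfl
        intro j hj
        simp at hj
        rw [Finset.filter_insert, if_neg (by omega)]
      · rw [hs]; congr 3; omega
    rcases s with _ | s
    · rcases t with _ | t
      · omega
      have e := ih 0 t (by omega) (fun a h1 h2 => by omega) (fun a h1 h2 => hP a h1 (by omega))
      have : Finset.powersetCard 0 (Finset.range (N+1)) = Finset.powersetCard 0 (Finset.range N) := by
        simp
      rw [this, Finset.sum_congr rfl key1, ← Finset.sum_mul, e, Finset.prod_Icc_succ_top (by omega), hQ0]
      simp
    · rw [Finset.range_add_one, Finset.powersetCard_succ_insert (by simp), Finset.sum_union,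
        Finset.sum_image]
      · rw [← Finset.range_add_one, Finset.sum_congr rfl key1,
          Finset.sum_congr rfl (key2 s rfl), ← Finset.sum_mul, ← Finset.sum_mul]
        have e2 := ih s t (by omega) (fun a h1 h2 => hQ a h1 (by omega)) hP
        rw [e2]
        have h1 := hQ (s+1) (by omega) le_rfl
        rcases t with _ | t
        · rw [Finset.powersetCard_eq_empty.2 (by simp; omega), hP0, Finset.prod_Icc_succ_top (by omega)]
          simp
        · have e1 := ih (s+1) t (by omega) hQ (fun a h1 h2 => hP a h1 (by omega))
          have h2 := hP (t+1) (by omega) le_rfl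
          rw [e1, Finset.prod_Icc_succ_top (by omega), Finset.prod_Icc_succ_top (by omega)]
          field_simp
          ring
      · intro A hA B hB hAB
        simp only [Finset.mem_coe, Finset.mem_powersetCard] at hA hB
        have hA' : N ∉ A := fun hx => by have := hA.1 hx; simp at this
        have hB' : N ∉ B := fun hx => by have := hB.1 hx; simp at this
        rw [← Finset.erase_insert hA', ← Finset.erase_insert hB', hAB]
      · rw [Finset.disjoint_left]
        intro A hA hB
        simp only [Finset.mem_image, Finset.mem_powersetCard] at hA hB
        obtain ⟨B, hB, rfl⟩ := hB
        have := hA.1 (Finset.mem_insert_self N B)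
        simp at this

theorem summable_pi_prod (g : ℕ → ℝ) (hg : ∀ x, 0 ≤ g x) (hs : Summable g) (n : ℕ) :
    Summable (fun v : Fin n → ℕ => ∏ i, g (v i)) := by
  induction n with
  | zero => exact (hasSum_fintype _).summable
  | succ n ih =>
    rw [← (Fin.consEquiv (fun _ => ℕ)).summable_iff]
    have := hs.mul_of_nonneg ih hg (fun v => Finset.prod_nonneg fun i _ => hg _)
    refine this.congr ?_
    rintro ⟨a, v⟩
    simp [Fin.consEquiv, Fin.prod_univ_succ]

theorem mzv_summable (n : ℕ) (hn : 1 ≤ n) (kv : Fin n → ℕ) (h1 : ∀ i, 1 ≤ kv i)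
    (h2 : ∀ i : Fin n, (i : ℕ) = n - 1 → 2 ≤ kv i) :
    Summable (fun v : Fin n → ℕ => (∏ i : Fin n, ((PS v ((i : ℕ) + 1) : ℕ) : ℝ) ^ kv i)⁻¹) := by
  have hn0 : (0:ℝ) < n := by exact_mod_cast hn
  have hs : Summable (fun x : ℕ => (((x + 1 : ℕ) : ℝ) ^ (1 + 1 / (n:ℝ)))⁻¹) := by
    have := Real.summable_nat_rpow_inv.2 (show 1 < 1 + 1 / (n:ℝ) by simp; omega)
    exact (summable_nat_add_iff 1).2 this
  refine Summable.of_nonneg_of_le (fun v => by positivity) ?_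
    (summable_pi_prod _ (fun x => by positivity) hs n)
  intro v
  rw [Finset.prod_inv_distrib]
  have hp : ∀ i : Fin n, (1:ℝ) ≤ PS v (i + 1) := fun i => by
    exact_mod_cast PS_pos v _ (by omega) (by omega)
  apply inv_anti₀
  · apply Finset.prod_pos; intro i _; positivity
  let L : Fin n := ⟨n - 1, by omega⟩
  calc ∏ i, ((v i + 1 : ℕ) : ℝ) ^ (1 + 1 / (n:ℝ)) ≤
      ∏ i : Fin n, ((PS v (i + 1) : ℕ) : ℝ) ^ (1 + 1 / (n:ℝ)) := by
        apply Finset.prod_le_prod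
        · intro i _; positivity
        · intro i _
          apply Real.rpow_le_rpow (by positivity) _ (by positivity)
          exact_mod_cast le_PS v i
    _ = (∏ i : Fin n, ((PS v (i + 1) : ℕ) : ℝ)) * ∏ i : Fin n, ((PS v (i + 1) : ℕ) : ℝ) ^ (1 / (n:ℝ)) := by
        rw [← Finset.prod_mul_distrib]
        apply Finset.prod_congr rfl
        intro i _
        rw [Real.rpow_add (by linarith [hp i]), Real.rpow_one]
    _ ≤ (∏ i : Fin n, ((PS v (i + 1) : ℕ) : ℝ)) * ∏ i : Fin n, ((PS v (L + 1) : ℕ) : ℝ) ^ (1 / (n:ℝ)) := by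
        apply mul_le_mul_of_nonneg_left _ (by positivity)
        apply Finset.prod_le_prod
        · intro i _; positivity
        · intro i _
          apply Real.rpow_le_rpow (by positivity) _ (by positivity)
          exact_mod_cast PS_mono v (by simp [L]; omega)
    _ = (∏ i : Fin n, ((PS v (i + 1) : ℕ) : ℝ)) * ((PS v (L + 1) : ℕ) : ℝ) := by
        congr 1
        rw [Finset.prod_const, Finset.card_univ, Fintype.card_fin, ← Real.rpow_natCast, ← Real.rpow_mul (by positivity)]
        rw [one_div, inv_mul_cancel₀ hn0.ne', Real.rpow_one]
    _ ≤ (∏ i : Fin n, ((PS v (i + 1) : ℕ) : ℝ)) * ∏ i : Fin n, ((PS v (i + 1) : ℕ) : ℝ) ^ (kv i - 1) := by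
        apply mul_le_mul_of_nonneg_left _ (by positivity)
        rw [← Finset.mul_prod_erase _ _ (Finset.mem_univ L)]
        have a1 : ((PS v (L + 1) : ℕ) : ℝ) ≤ ((PS v (L + 1) : ℕ) : ℝ) ^ (kv L - 1) :=
          le_self_pow₀ (hp L) (by have := h2 L rfl; omega)
        have a2 : (1:ℝ) ≤ ∏ i ∈ Finset.univ.erase L, ((PS v (i + 1) : ℕ) : ℝ) ^ (kv i - 1) := by
          apply Finset.one_le_prod
          intro i _; exact one_le_pow₀ (hp i)
        have := hp L
        nlinarith
    _ = _ := by
        rw [← Finset.prod_mul_distrib]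
        apply Finset.prod_congr rfl
        intro i _
        rw [← pow_succ']
        congr 1
        have := h1 i
        omega

theorem orderEmb_lt {n l : ℕ} (J : Finset (Fin n)) (h : J.card = l) (j : ℕ) (x : Fin l) :
    ((J.orderEmbOfFin h x : Fin n) : ℕ) < j ↔ (x : ℕ) < (J.filter (fun i : Fin n => (i : ℕ) < j)).card := by
  have hc : (J.filter (fun i : Fin n => (i : ℕ) < j)).card =
      (Finset.univ.filter (fun y : Fin l => ((J.orderEmbOfFin h y : Fin n) : ℕ) < j)).card := by
    conv_lhs => rw [← Finset.map_orderEmbOfFin_univ J h]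
    rw [Finset.filter_map, Finset.card_map]
    rfl
  rw [hc]
  constructor
  · intro hx
    have : Finset.Iic x ⊆ Finset.univ.filter (fun y : Fin l => ((J.orderEmbOfFin h y : Fin n) : ℕ) < j) := by
      intro y hy
      simp at hy ⊢
      have : J.orderEmbOfFin h y ≤ J.orderEmbOfFin h x := by simpa using hy
      have : (J.orderEmbOfFin h y : ℕ) ≤ J.orderEmbOfFin h x := this
      omega
    have := Finset.card_le_card this
    simp at this
    omega
  · intro hx
    by_contra hn
    have : Finset.univ.filter (fun y : Fin l => ((J.orderEmbOfFin h y : Fin n) : ℕ) < j) ⊆ Finset.Iio x := by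
      intro y hy
      simp at hy ⊢
      by_contra hxy
      have : J.orderEmbOfFin h x ≤ J.orderEmbOfFin h y := by simpa using hxy
      have : (J.orderEmbOfFin h x : ℕ) ≤ J.orderEmbOfFin h y := this
      omega
    have := Finset.card_le_card this
    simp at this
    omega

theorem PS_split {n l l' : ℕ} (J : Finset (Fin n)) (h : J.card = l) (h' : Jᶜ.card = l')
    (v : Fin n → ℕ) (j : ℕ) (hj : j ≤ n) :
    PS v j = PS (fun x => v (J.orderEmbOfFin h x)) ((J.filter (fun i : Fin n => (i : ℕ) < j)).card) +
      PS (fun x => v (Jᶜ.orderEmbOfFin h' x)) (j - (J.filter (fun i : Fin n => (i : ℕ) < j)).card) := by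
  have hc : j - (J.filter (fun i : Fin n => (i : ℕ) < j)).card =
      (Jᶜ.filter (fun i : Fin n => (i : ℕ) < j)).card := by
    have e : (J.filter (fun i : Fin n => (i : ℕ) < j)).card +
      (Jᶜ.filter (fun i : Fin n => (i : ℕ) < j)).card = j := by
      rw [← Finset.card_union_of_disjoint, ← Finset.filter_union, Finset.union_compl]
      · simp [Fin.card_filter_val_lt, hj]
      · exact Finset.disjoint_filter_filter disjoint_compl_right
    omega
  rw [hc]
  unfold PS
  simp_rw [← orderEmb_lt J h, ← orderEmb_lt Jᶜ h']
  rw [Finset.sum_filter, Finset.sum_filter, Finset.sum_filter,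
    ← Equiv.sum_comp (finSumEquivOfFinset h h'), Fintype.sum_sum_type]
  simp
  congr!

theorem tsum_M (n m s : ℕ) (hm : 1 ≤ m) (J : Finset (Fin n)) (h : J.card = s + 1)
    (h' : Jᶜ.card = n - (s + 1))
    (f : (Fin n → ℕ) → ℝ) (hf : Summable f) (G : (Fin s → ℕ) → (Fin (n - (s + 1)) → ℕ) → ℝ)
    (hfG : ∀ v, (∑ j ∈ J, (v j + 1)) = m → f v = G (fun x => v (J.orderEmbOfFin h x.castSucc))
      (fun x => v (Jᶜ.orderEmbOfFin h' x))) :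
    (∀ q ∈ (Fintype.piFinset fun _ : Fin s => Finset.range m).filter
      (fun q => (∑ i, (q i + 1)) < m), Summable (G q)) ∧
    ∑' mv : {mv : Fin n → ℕ // (∑ j ∈ J, (mv j + 1)) = m}, f mv.val =
      ∑ q ∈ (Fintype.piFinset fun _ : Fin s => Finset.range m).filter
      (fun q => (∑ i, (q i + 1)) < m), ∑' p, G q p := by
  set F := (Fintype.piFinset fun _ : Fin s => Finset.range m).filter
      (fun q => (∑ i, (q i + 1)) < m) with hF
  have hmem : ∀ q, q ∈ F ↔ (∑ i, (q i + 1)) < m := by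
    intro q
    simp only [hF, Finset.mem_filter, Fintype.mem_piFinset, Finset.mem_range, and_iff_right_iff_imp]
    intro hq i
    have := Finset.single_le_sum (f := fun i => q i + 1) (fun _ _ => by omega) (Finset.mem_univ i)
    omega
  have hJs : ∀ v : Fin n → ℕ, ∑ j ∈ J, (v j + 1) =
      (∑ x : Fin s, (v (J.orderEmbOfFin h x.castSucc) + 1)) + (v (J.orderEmbOfFin h (Fin.last s)) + 1) := by
    intro v
    rw [← Fin.sum_univ_castSucc (fun x => v (J.orderEmbOfFin h x) + 1)]
    conv_lhs => rw [← Finset.map_orderEmbOfFin_univ J h]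
    rw [Finset.sum_map]
    rfl
  let toF : {mv : Fin n → ℕ // (∑ j ∈ J, (mv j + 1)) = m} → {q // q ∈ F} × (Fin (n - (s + 1)) → ℕ) :=
    fun v => (⟨fun x => v.1 (J.orderEmbOfFin h x.castSucc), by
      rw [hmem]; have := hJs v.1; have := v.2; omega⟩, fun x => v.1 (Jᶜ.orderEmbOfFin h' x))
  have bij : Function.Bijective toF := by
    constructor
    · rintro ⟨v, hv⟩ ⟨w, hw⟩ hvw
      simp only [toF, Prod.mk.injEq, Subtype.mk.injEq] at hvw
      have e1 : ∀ x : Fin s, v (J.orderEmbOfFin h x.castSucc) = w (J.orderEmbOfFin h x.castSucc) :=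
        fun x => congrFun hvw.1 x
      have e2 := fun x => congrFun hvw.2 x
      have e3 : v (J.orderEmbOfFin h (Fin.last s)) = w (J.orderEmbOfFin h (Fin.last s)) := by
        rw [hJs] at hv hw
        simp only [e1] at hv
        omega
      rw [Subtype.mk.injEq]
      funext i
      obtain ⟨y, rfl⟩ := (finSumEquivOfFinset h h').surjective i
      rcases y with y | y
      · simp only [finSumEquivOfFinset_inl]
        refine Fin.lastCases e3 e1 y
      · simpa using e2 y
    · rintro ⟨⟨q, hq⟩, p⟩
      rw [hmem] at hq
      let v : Fin n → ℕ := fun i => Sum.elim (Fin.snoc (α := fun _ => ℕ) q (m - 1 - ∑ i, (q i + 1))) p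
        ((finSumEquivOfFinset h h').symm i)
      have v1 : ∀ x, v (J.orderEmbOfFin h x) = Fin.snoc (α := fun _ => ℕ) q (m - 1 - ∑ i, (q i + 1)) x := by
        intro x
        simp only [v]
        rw [← finSumEquivOfFinset_inl h h', Equiv.symm_apply_apply]
        rfl
      have v2 : ∀ x, v (Jᶜ.orderEmbOfFin h' x) = p x := by
        intro x
        simp only [v]
        rw [← finSumEquivOfFinset_inr h h', Equiv.symm_apply_apply]
        rfl
      refine ⟨⟨v, ?_⟩, ?_⟩
      · rw [hJs]
        simp only [v1, Fin.snoc_castSucc, Fin.snoc_last]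
        omega
      · simp only [toF, v1, v2, Fin.snoc_castSucc]
  let E := Equiv.ofBijective toF bij
  have hE : ∀ v, f v.1 = (fun y : {q // q ∈ F} × (Fin (n - (s + 1)) → ℕ) => G y.1.1 y.2) (E v) :=
    fun v => hfG v.1 v.2
  have hsum : Summable (fun y : {q // q ∈ F} × (Fin (n - (s + 1)) → ℕ) => G y.1.1 y.2) := by
    rw [← E.summable_iff]
    refine (hf.comp_injective Subtype.val_injective).congr ?_
    intro v
    exact hE v
  refine ⟨fun q hq => hsum.prod_factor ⟨q, hq⟩, ?_⟩
  rw [tsum_congr hE, E.tsum_eq (fun y : {q // q ∈ F} × (Fin (n - (s + 1)) → ℕ) => G y.1.1 y.2),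
    hsum.tsum_prod, tsum_fintype, ← Finset.sum_coe_sort F]

theorem term_eq (n k m s r : ℕ) (hsr : s + 1 ≤ r) (hrn : r ≤ n) (J : Finset (Fin n))
    (h : J.card = s + 1) (h' : Jᶜ.card = n - (s + 1))
    (hr : (J.sup fun j => (j : ℕ) + 1) = r) (kv : Fin n → ℕ) (hkv : kv ∈ Ikr n k r)
    (v : Fin n → ℕ) (hv : (∑ j ∈ J, (v j + 1)) = m) :
    (∏ i : Fin n, ((PS v ((i : ℕ) + 1) : ℕ) : ℝ) ^ kv i)⁻¹ =
    (∏ j ∈ Finset.range (r - 1),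
      (((PS (fun x : Fin s => v (J.orderEmbOfFin h x.castSucc))
          (((((J.image Fin.val).erase (r - 1)).filter (· < j + 1)).card)) : ℕ) : ℝ) +
        ((PS (fun x => v (Jᶜ.orderEmbOfFin h' x))
          (j + 1 - (((J.image Fin.val).erase (r - 1)).filter (· < j + 1)).card) : ℕ) : ℝ))⁻¹) *
      Cf n m (s + 1) r (fun x => v (Jᶜ.orderEmbOfFin h' x)) kv := by
  have hle : ∀ i ∈ J, (i : ℕ) + 1 ≤ r := fun i hi => by
    rw [← hr]; exact Finset.le_sup (f := fun j : Fin n => (j : ℕ) + 1) hi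
  obtain ⟨top, htop, htopr⟩ : ∃ i ∈ J, (i : ℕ) + 1 = r := by
    have hne : J.Nonempty := Finset.card_pos.1 (by omega)
    obtain ⟨i, hi, e⟩ := Finset.exists_mem_eq_sup J hne (fun j => (j : ℕ) + 1)
    exact ⟨i, hi, by rw [← hr, e]⟩
  have hc : ∀ j, j + 1 < r → (((J.image Fin.val).erase (r - 1)).filter (· < j + 1)).card =
      (J.filter (fun i : Fin n => (i : ℕ) < j + 1)).card := by
    intro j hj
    rw [← Finset.card_image_of_injective (J.filter _) Fin.val_injective]
    congr 1
    ext x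
    simp only [Finset.mem_filter, Finset.mem_erase, Finset.mem_image]
    constructor
    · rintro ⟨⟨_, y, hy, rfl⟩, h2⟩
      exact ⟨y, ⟨hy, h2⟩, rfl⟩
    · rintro ⟨y, ⟨hy, h2⟩, rfl⟩
      exact ⟨⟨by omega, y, hy, rfl⟩, h2⟩
  have hcs : ∀ j, j + 1 < r → (J.filter (fun i : Fin n => (i : ℕ) < j + 1)).card ≤ s := by
    intro j hj
    have : J.filter (fun i : Fin n => (i : ℕ) < j + 1) ⊂ J := by
      rw [Finset.filter_ssubset]
      exact ⟨top, htop, by omega⟩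
    have := Finset.card_lt_card this
    omega
  have hPSq : ∀ c, c ≤ s → PS (fun x => v (J.orderEmbOfFin h x)) c =
      PS (fun x : Fin s => v (J.orderEmbOfFin h x.castSucc)) c := by
    intro c hc
    unfold PS
    rw [Finset.sum_filter, Finset.sum_filter, Fin.sum_univ_castSucc]
    simp
    omega
  have hPSm : PS (fun x => v (J.orderEmbOfFin h x)) (s + 1) = m := by
    rw [PS_full _ _ le_rfl, ← hv]
    conv_rhs => rw [← Finset.map_orderEmbOfFin_univ J h]
    rw [Finset.sum_map]
    rfl
  simp only [Ikr, Finset.mem_filter] at hkv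
  obtain ⟨-, -, -, -, hk1⟩ := hkv
  have hkval : ∀ i : Fin n, kv i = kval n kv ((i : ℕ) + 1) := by
    intro i; simp [kval]
  rw [Finset.prod_congr rfl (fun i _ => by rw [hkval i]),
    Fin.prod_univ_eq_prod_range (fun j => ((PS v (j + 1) : ℕ) : ℝ) ^ kval n kv (j + 1)) n,
    ← Finset.prod_inv_distrib,
    ← Finset.prod_range_mul_prod_Ico _ (show r - 1 ≤ n by omega)]
  congr 1
  · apply Finset.prod_congr rfl
    intro j hj
    rw [Finset.mem_range] at hj
    have hjr : j + 1 < r := by omega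
    have : kval n kv (j + 1) = 1 := by
      have := hkval ⟨j, by omega⟩
      simp only at this
      rw [← this]
      exact hk1 _ (by simp only; omega)
    rw [this, pow_one, hc j hjr, PS_split J h h' v (j + 1) (by omega), hPSq _ (hcs j hjr)]
    push_cast
    rfl
  · unfold Cf
    have : Finset.Icc r n = Finset.Ico (r - 1 + 1) (n + 1) := by
      ext x; simp; omega
    rw [this, ← Finset.prod_Ico_add']
    apply Finset.prod_congr rfl
    intro j hj
    rw [Finset.mem_Ico] at hj
    have : J.filter (fun i : Fin n => (i : ℕ) < j + 1) = J := by
      apply Finset.filter_true_of_mem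
      intro x hx
      have := hle x hx
      omega
    rw [PS_split J h h' v (j + 1) (by omega), this, h, hPSm]

theorem sum_J (n s r : ℕ) (hsr : s + 1 ≤ r) (hrn : r ≤ n) (H : Finset ℕ → ℝ) :
    ∑ J ∈ (Finset.univ : Finset (Fin n)).powerset.filter
        (fun J => J.card = s + 1 ∧ (J.sup fun j => (j : ℕ) + 1) = r),
      H ((J.image Fin.val).erase (r - 1)) =
    ∑ J ∈ Finset.powersetCard s (Finset.range (r - 1)), H J := by
  have key : ∀ J : Finset (Fin n), J.card = s + 1 → (J.sup fun j => (j : ℕ) + 1) = r →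
      (∀ i ∈ J, (i : ℕ) + 1 ≤ r) ∧ r - 1 ∈ J.image Fin.val := by
    intro J h hr
    have hne : J.Nonempty := Finset.card_pos.1 (by omega)
    obtain ⟨i, hi, e⟩ := Finset.exists_mem_eq_sup J hne (fun j => (j : ℕ) + 1)
    refine ⟨fun i hi => by
      rw [← hr]; exact Finset.le_sup (f := fun j : Fin n => (j : ℕ) + 1) hi, ?_⟩
    rw [Finset.mem_image]
    exact ⟨i, hi, by omega⟩
  refine Finset.sum_bij' (fun J _ => (J.image Fin.val).erase (r - 1))
    (fun J' _ => Finset.univ.filter (fun i : Fin n => (i : ℕ) ∈ J' ∨ (i : ℕ) = r - 1)) ?_ ?_ ?_ ?_ ?_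
  · intro J hJ
    simp only [Finset.mem_filter] at hJ
    obtain ⟨k1, k2⟩ := key J hJ.2.1 hJ.2.2
    rw [Finset.mem_powersetCard]
    constructor
    · intro x hx
      rw [Finset.mem_erase, Finset.mem_image] at hx
      obtain ⟨hx, i, hi, rfl⟩ := hx
      have := k1 i hi
      rw [Finset.mem_range]; omega
    · rw [Finset.card_erase_of_mem k2, Finset.card_image_of_injective _ Fin.val_injective]
      omega
  · intro J' hJ'
    rw [Finset.mem_powersetCard] at hJ'
    have hlt : ∀ x ∈ J', x < r - 1 := fun x hx => by simpa using hJ'.1 hx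
    simp only [Finset.mem_filter, Finset.mem_powerset, Finset.subset_univ, true_and]
    constructor
    · rw [← Finset.card_image_of_injective _ Fin.val_injective]
      have : (Finset.univ.filter (fun i : Fin n => (i : ℕ) ∈ J' ∨ (i : ℕ) = r - 1)).image Fin.val =
          insert (r - 1) J' := by
        ext x
        simp only [Finset.mem_image, Finset.mem_filter, Finset.mem_univ, true_and, Finset.mem_insert]
        constructor
        · rintro ⟨y, hy, rfl⟩; tauto
        · intro hx
          have : x < n := by
            rcases hx with hx | hx
            · omega
            · have := hlt x hx; omega
          exact ⟨⟨x, this⟩, by simp only; tauto, rfl⟩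
      rw [this, Finset.card_insert_of_notMem (fun hx => by have := hlt _ hx; omega), hJ'.2]
    · apply le_antisymm
      · apply Finset.sup_le
        intro i hi
        simp only [Finset.mem_filter, Finset.mem_univ, true_and] at hi
        rcases hi with hi | hi
        · have := hlt _ hi; omega
        · omega
      · have := Finset.le_sup (s := Finset.univ.filter (fun i : Fin n => (i : ℕ) ∈ J' ∨ (i : ℕ) = r - 1))
          (f := fun j : Fin n => (j : ℕ) + 1) (b := ⟨r - 1, by omega⟩) (by simp)
        simp only at this
        omega
  · intro J hJ
    simp only [Finset.mem_filter] at hJ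
    obtain ⟨k1, k2⟩ := key J hJ.2.1 hJ.2.2
    ext i
    simp only [Finset.mem_filter, Finset.mem_univ, true_and, Finset.mem_erase, Finset.mem_image]
    rw [Finset.mem_image] at k2
    obtain ⟨t, ht, htr⟩ := k2
    constructor
    · rintro (⟨_, y, hy, e⟩ | hi)
      · rwa [← Fin.ext e]
      · rwa [← Fin.ext (htr.trans hi.symm)]
    · intro hi
      by_cases e : (i : ℕ) = r - 1
      · right; exact e
      · left; exact ⟨e, i, hi, rfl⟩
  · intro J' hJ'
    rw [Finset.mem_powersetCard] at hJ'
    have hlt : ∀ x ∈ J', x < r - 1 := fun x hx => by simpa using hJ'.1 hx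
    ext x
    simp only [Finset.mem_filter, Finset.mem_univ, true_and, Finset.mem_erase, Finset.mem_image]
    constructor
    · rintro ⟨hx, y, hy, rfl⟩; tauto
    · intro hx
      have := hlt x hx
      exact ⟨by omega, ⟨x, by omega⟩, Or.inl hx, rfl⟩
  · intro J hJ; rfl

/-- Proposition 2.1 of the paper: for `1 ≤ l ≤ r ≤ n`,
`∑_{|J|=l, max J = r} S(k,m,J) = A_l ∑_𝐩 B_{l,r}(𝐩) ∑_{𝐤∈I(k,r)} C_{l,r}(𝐩,𝐤)`. -/
theorem sum_S_fixed_card_max (n k m l r : ℕ) (hn : 1 ≤ n) (hk : n + 1 ≤ k) (hm : 1 ≤ m)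
    (hl : 1 ≤ l) (hlr : l ≤ r) (hrn : r ≤ n) :
    ∑ J ∈ (Finset.univ : Finset (Fin n)).powerset.filter
        (fun J => J.card = l ∧ (J.sup fun j => (j : ℕ) + 1) = r),
      S n k m J
    = Af m l * ∑' p : Fin (n - l) → ℕ,
        Bf n l r p * ∑ kv ∈ Ikr n k r, Cf n m l r p kv := by
  obtain ⟨s, rfl⟩ : ∃ s, l = s + 1 := ⟨l - 1, by omega⟩
  let W : Finset ℕ → (Fin s → ℕ) → (Fin (n - (s + 1)) → ℕ) → ℝ := fun J q p =>
    ∏ j ∈ Finset.range (r - 1),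
      (((PS q ((J.filter (· < j + 1)).card) : ℕ) : ℝ) +
        ((PS p (j + 1 - (J.filter (· < j + 1)).card) : ℕ) : ℝ))⁻¹
  let F := (Fintype.piFinset fun _ : Fin s => Finset.range m).filter
      (fun q => (∑ i, (q i + 1)) < m)
  have main : ∀ J ∈ (Finset.univ : Finset (Fin n)).powerset.filter
        (fun J => J.card = s + 1 ∧ (J.sup fun j => (j : ℕ) + 1) = r),
      ∀ kv ∈ Ikr n k r,
      (∀ q ∈ F, Summable (fun p => W ((J.image Fin.val).erase (r - 1)) q p * Cf n m (s + 1) r p kv)) ∧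
      ∑' mv : {mv : Fin n → ℕ // (∑ j ∈ J, (mv j + 1)) = m},
        (∏ i : Fin n, ((PS mv.val ((i : ℕ) + 1) : ℕ) : ℝ) ^ kv i)⁻¹ =
      ∑ q ∈ F, ∑' p, W ((J.image Fin.val).erase (r - 1)) q p * Cf n m (s + 1) r p kv := by
    intro J hJ kv hkv
    simp only [Finset.mem_filter] at hJ
    have h' : Jᶜ.card = n - (s + 1) := by
      rw [Finset.card_compl, Fintype.card_fin, hJ.2.1]
    have hkv' := hkv
    simp only [Ikr, Finset.mem_filter] at hkv'
    exact tsum_M n m s hm J hJ.2.1 h' _ (mzv_summable n hn kv hkv'.2.1 hkv'.2.2.1)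
      (fun q p => W ((J.image Fin.val).erase (r - 1)) q p * Cf n m (s + 1) r p kv)
      (fun v hv => term_eq n k m s r hlr hrn J hJ.2.1 h' hJ.2.2 kv hkv v hv)
  have step1 : ∀ J ∈ (Finset.univ : Finset (Fin n)).powerset.filter
        (fun J => J.card = s + 1 ∧ (J.sup fun j => (j : ℕ) + 1) = r),
      S n k m J = ∑' p, ∑ kv ∈ Ikr n k r, ∑ q ∈ F,
        W ((J.image Fin.val).erase (r - 1)) q p * Cf n m (s + 1) r p kv := by
    intro J hJ
    have hJr : (J.sup fun j => (j : ℕ) + 1) = r := (Finset.mem_filter.1 hJ).2.2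
    rw [S, hJr, Summable.tsum_finsetSum (fun kv hkv => summable_sum (main J hJ kv hkv).1)]
    refine Finset.sum_congr rfl fun kv hkv => ?_
    rw [Summable.tsum_finsetSum (main J hJ kv hkv).1]
    exact (main J hJ kv hkv).2
  rw [Finset.sum_congr rfl step1, ← Summable.tsum_finsetSum
    (fun J hJ => summable_sum (fun kv hkv => summable_sum (main J hJ kv hkv).1)), ← tsum_mul_left]
  apply tsum_congr
  intro p
  rw [sum_J n s r hlr hrn (fun J' => ∑ kv ∈ Ikr n k r, ∑ q ∈ F, W J' q p * Cf n m (s + 1) r p kv),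
    Finset.sum_comm, Finset.mul_sum, Finset.mul_sum]
  apply Finset.sum_congr rfl
  intro kv _
  rw [Finset.sum_comm, Af, ← mul_assoc, Finset.sum_mul, Finset.sum_mul]
  apply Finset.sum_congr rfl
  intro q _
  rw [← Finset.sum_mul]
  congr 1
  have := shuffle (fun a => ((PS q a : ℕ) : ℝ)) (fun b => ((PS p b : ℕ) : ℝ)) (by simp [PS_zero])
    (by simp [PS_zero]) (r - 1) s (r - (s + 1)) (by omega)
    (fun a h1 h2 => by exact_mod_cast PS_pos q a h1 h2)
    (fun a h1 h2 => by exact_mod_cast PS_pos p a h1 (by omega))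
  exact this
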